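/- Let G be a finite simple graph on vertex set V and let A and B be stable sets of G with B \ A nonempty. Then there exists a stable set C of G with C ≠ A such that: A ∩ B ⊆ C ⊆ A ∪ B; C ∩ (B \ A) ≠ ∅; and e_A and e_C form an edge of SSP(G) (i.e., the segment [e_A, e_C] is a face of SSP(G)). -/

import Mathlib

variable {V : Type*} [Fintype V] [DecidableEq V]

/-- Indicator vector of a finite set of vertices. -/
def indVec (A : Finset V) : V → ℝ := fun v => if v ∈ A then 1 else 0

/-- A set of vertices is stable if no two of its elements are adjacent. -/
def IsStable (G : SimpleGraph V) (A : Finset V) : Prop :=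
  ∀ v ∈ A, ∀ w ∈ A, ¬ G.Adj v w

/-- Stable set polytope of `G`. -/
def SSP (G : SimpleGraph V) : Set (V → ℝ) :=
  convexHull ℝ {x | ∃ A : Finset V, IsStable G A ∧ x = indVec A}

/-! Chvátal's criterion: `e_A` and `e_C` span an edge as soon as the graph induced on `A ∆ C` is
connected. The inequalities `0 ≤ x v`, `x v ≤ 1` and, for adjacent `v` and `w`, `x v + x w ≤ 1` are
valid on the polytope; those tight at both `e_A` and `e_C` cut out a face. On this face `x` agrees
with `e_A` off `A ∆ C`, and along the edges of the bipartite graph induced on `A ∆ C` its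
coordinates alternate between `t` and `1 - t`, so by connectedness a single `t` describes `x`.

To exchange `A` towards `B`, switch `A` along the connected component of a vertex of `B \ A` in the
graph induced on `A ∆ B`.
-/

open scoped symmDiff

section Extreme

variable {𝕜 E : Type*} [Semiring 𝕜] [PartialOrder 𝕜] [IsStrictOrderedRing 𝕜]
  [AddCommMonoid E] [Module 𝕜 E]

theorem isExtreme_setOf_map_eq_of_le {S : Set E} (f : E →ₗ[𝕜] 𝕜) {M : 𝕜}
    (hf : ∀ x ∈ S, f x ≤ M) : IsExtreme 𝕜 S {x ∈ S | f x = M} := by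
  refine ⟨Set.sep_subset _ _, fun x hx y hy z hz hzxy => ⟨hx, ?_⟩⟩
  obtain ⟨a, b, ha, hb, hab, rfl⟩ := hzxy
  by_contra hne
  have hlt : f x < M := (hf x hx).lt_of_ne hne
  have : f (a • x + b • y) < M :=
    calc f (a • x + b • y) = a * f x + b * f y := by simp
      _ < a * M + b * M :=
        add_lt_add_of_lt_of_le (mul_lt_mul_of_pos_left hlt ha)
          (mul_le_mul_of_nonneg_left (hf y hy) hb.le)
      _ = M := by rw [← add_mul, hab, one_mul]
  exact this.ne hz.2

end Extreme

section Connected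

variable {α β : Type*} {G : SimpleGraph α}

theorem eq_of_reachable_of_forall_adj {f : α → β} (hf : ∀ v w, G.Adj v w → f v = f w) {v w : α}
    (h : G.Reachable v w) : f v = f w := by
  obtain ⟨p⟩ := h
  induction p with
  | nil => rfl
  | cons hadj _ ih => exact (hf _ _ hadj).trans ih

theorem exists_connected_induce_of_mem (G : SimpleGraph α) {S : Set α} {r : α} (hr : r ∈ S) :
    ∃ K ⊆ S, r ∈ K ∧ (G.induce K).Connected ∧ ∀ v ∈ K, ∀ w ∈ S, G.Adj v w → w ∈ K := by
  let c := (G.induce S).connectedComponentMk ⟨r, hr⟩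
  refine ⟨(↑) '' c.supp, Subtype.coe_image_subset _ _, ⟨_, rfl, rfl⟩, ?_, ?_⟩
  · let φ : (G.induce S).induce c.supp →g G.induce ((↑) '' c.supp) :=
      ⟨fun v => ⟨v, v, v.2, rfl⟩, id⟩
    have hφ : Function.Surjective φ := by
      rintro ⟨_, v, hv, rfl⟩
      exact ⟨⟨v, hv⟩, rfl⟩
    exact c.maximal_connected_induce_supp.prop.map φ hφ
  · rintro _ ⟨v, hv, rfl⟩ w hw hadj
    exact ⟨⟨w, hw⟩, c.mem_supp_of_adj_mem_supp hv hadj, rfl⟩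

end Connected

section StableSet

variable {α : Type*} [DecidableEq α] {G : SimpleGraph α} {A B C : Finset α} {x : α → ℝ}

theorem indVec_mem_SSP (hA : IsStable G A) : indVec A ∈ SSP G :=
  subset_convexHull ℝ _ ⟨A, hA, rfl⟩

theorem indVec_nonneg (A : Finset α) (v : α) : 0 ≤ indVec A v := by
  unfold indVec; split_ifs <;> norm_num

theorem indVec_le_one (A : Finset α) (v : α) : indVec A v ≤ 1 := by
  unfold indVec; split_ifs <;> norm_num

theorem IsStable.indVec_add_le_one (hA : IsStable G A) {v w : α} (h : G.Adj v w) :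
    indVec A v + indVec A w ≤ 1 := by
  have hvw : ¬(v ∈ A ∧ w ∈ A) := fun ⟨hv, hw⟩ => hA v hv w hw h
  unfold indVec
  grind

theorem map_le_of_mem_SSP (f : (α → ℝ) →ₗ[ℝ] ℝ) {M : ℝ}
    (hf : ∀ S, IsStable G S → f (indVec S) ≤ M) (hx : x ∈ SSP G) : f x ≤ M := by
  refine convexHull_min ?_ (convex_halfSpace_le f.isLinear M) hx
  rintro _ ⟨S, hS, rfl⟩
  exact hf S hS

theorem nonneg_of_mem_SSP (hx : x ∈ SSP G) (v : α) : 0 ≤ x v :=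
  neg_nonpos.1 <| map_le_of_mem_SSP (-LinearMap.proj v)
    (fun S _ => neg_nonpos.2 (indVec_nonneg S v)) hx

theorem le_one_of_mem_SSP (hx : x ∈ SSP G) (v : α) : x v ≤ 1 :=
  map_le_of_mem_SSP (LinearMap.proj v) (fun S _ => indVec_le_one S v) hx

theorem add_le_one_of_mem_SSP (hx : x ∈ SSP G) {v w : α} (h : G.Adj v w) : x v + x w ≤ 1 :=
  map_le_of_mem_SSP (LinearMap.proj (R := ℝ) (φ := fun _ => ℝ) v + LinearMap.proj w)
    (fun _ hS => hS.indVec_add_le_one h) hx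

/-- For stable `A` and `C`, the face of `SSP G` cut out by those of the inequalities `0 ≤ x v`,
`x v ≤ 1` and `x v + x w ≤ 1` (`v` and `w` adjacent) that are tight at both `e_A` and `e_C`. Off
`A ∆ C`, where `e_A` and `e_C` agree, tightness of the bounds on `x v` is encoded as
`x v = e_A v`. -/
def tightFace (G : SimpleGraph α) (A C : Finset α) : Set (α → ℝ) :=
  {x ∈ SSP G | (∀ v ∉ A ∆ C, x v = indVec A v) ∧
    ∀ v ∈ A ∆ C, ∀ w ∈ A ∆ C, G.Adj v w → x v + x w = 1}

theorem isExtreme_SSP_setOf_coord_eq (G : SimpleGraph α) (A : Finset α) (v : α) :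
    IsExtreme ℝ (SSP G) {x ∈ SSP G | x v = indVec A v} := by
  by_cases hv : v ∈ A
  · simpa [indVec, hv] using isExtreme_setOf_map_eq_of_le (LinearMap.proj v)
      fun x (hx : x ∈ SSP G) => le_one_of_mem_SSP hx v
  · simpa [indVec, hv] using isExtreme_setOf_map_eq_of_le (-LinearMap.proj v)
      fun x (hx : x ∈ SSP G) => neg_nonpos.2 (nonneg_of_mem_SSP hx v)

theorem isExtreme_SSP_setOf_add_eq_one {v w : α} (h : G.Adj v w) :
    IsExtreme ℝ (SSP G) {x ∈ SSP G | x v + x w = 1} :=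
  isExtreme_setOf_map_eq_of_le (LinearMap.proj (R := ℝ) (φ := fun _ => ℝ) v + LinearMap.proj w)
    fun _ hx => add_le_one_of_mem_SSP hx h

theorem isExtreme_tightFace (G : SimpleGraph α) (A C : Finset α) :
    IsExtreme ℝ (SSP G) (tightFace G A C) := by
  refine ⟨Set.sep_subset _ _, fun x hx y hy z ⟨hz, hcoord, hedge⟩ hzxy => ⟨hx, ?_, ?_⟩⟩
  · exact fun v hv => ((isExtreme_SSP_setOf_coord_eq G A v).left_mem_of_mem_openSegment
      hx hy ⟨hz, hcoord v hv⟩ hzxy).2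
  · exact fun v hv w hw h => ((isExtreme_SSP_setOf_add_eq_one h).left_mem_of_mem_openSegment
      hx hy ⟨hz, hedge v hv w hw h⟩ hzxy).2

theorem convex_tightFace (G : SimpleGraph α) (A C : Finset α) : Convex ℝ (tightFace G A C) := by
  rintro x ⟨hx, hxv, hxe⟩ y ⟨hy, hyv, hye⟩ a b ha hb hab
  refine ⟨convex_convexHull ℝ _ hx hy ha hb hab, fun v hv => ?_, fun v hv w hw h => ?_⟩ <;>
    simp only [Pi.add_apply, Pi.smul_apply, smul_eq_mul]
  · rw [hxv v hv, hyv v hv, ← add_mul, hab, one_mul]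
  · linear_combination a * hxe v hv w hw h + b * hye v hv w hw h + hab

theorem IsStable.mem_iff_notMem_of_adj (hA : IsStable G A) (hC : IsStable G C) {v w : α}
    (hv : v ∈ A ∆ C) (hw : w ∈ A ∆ C) (h : G.Adj v w) : v ∈ C ↔ w ∉ C := by
  have hvwA : ¬(v ∈ A ∧ w ∈ A) := fun ⟨hvA, hwA⟩ => hA v hvA w hwA h
  have hvwC : ¬(v ∈ C ∧ w ∈ C) := fun ⟨hvC, hwC⟩ => hC v hvC w hwC h
  grind [Finset.mem_symmDiff]

theorem segment_subset_tightFace (hA : IsStable G A) (hC : IsStable G C) :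
    segment ℝ (indVec A) (indVec C) ⊆ tightFace G A C := by
  refine (convex_tightFace G A C).segment_subset
    ⟨indVec_mem_SSP hA, fun _ _ => rfl, fun v hv w hw h => ?_⟩
    ⟨indVec_mem_SSP hC, fun v hv => ?_, fun v hv w hw h => ?_⟩
  · have halt := hA.mem_iff_notMem_of_adj hC hv hw h
    grind [Finset.mem_symmDiff, indVec]
  · grind [Finset.mem_symmDiff, indVec]
  · have halt := hA.mem_iff_notMem_of_adj hC hv hw h
    grind [Finset.mem_symmDiff, indVec]

theorem tightFace_subset_segment (hA : IsStable G A) (hC : IsStable G C)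
    (hconn : (G.induce (A ∆ C : Finset α)).Connected) :
    tightFace G A C ⊆ segment ℝ (indVec A) (indVec C) := by
  rintro x ⟨hx, hcoord, hedge⟩
  -- At `(1 - t) • e_A + t • e_C`, the function `s` equals `t` throughout `A ∆ C`.
  let s : α → ℝ := fun v => if v ∈ C then x v else 1 - x v
  have hadj : ∀ v w : (A ∆ C : Finset α), G.Adj v w → s v = s w := by
    rintro ⟨v, hv⟩ ⟨w, hw⟩ h
    have halt := hA.mem_iff_notMem_of_adj hC hv hw h
    have hsum := hedge v hv w hw h
    grind
  obtain ⟨r⟩ := hconn.nonempty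
  have hconst : ∀ v ∈ A ∆ C, s v = s r := fun v hv =>
    eq_of_reachable_of_forall_adj (f := fun u : (A ∆ C : Finset α) => s u) hadj (hconn ⟨v, hv⟩ r)
  have hs : s r ∈ Set.Icc (0 : ℝ) 1 := by
    have hnonneg := nonneg_of_mem_SSP hx r
    have hle_one := le_one_of_mem_SSP hx r
    grind
  rw [segment_eq_image]
  refine ⟨s r, hs, funext fun v => ?_⟩
  simp only [Pi.add_apply, Pi.smul_apply, smul_eq_mul]
  by_cases hv : v ∈ A ∆ C
  · have hsv := hconst v hv
    grind [Finset.mem_symmDiff, indVec]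
  · have hxv := hcoord v hv
    grind [Finset.mem_symmDiff, indVec]

theorem isExtreme_segment_indVec_of_connected (hA : IsStable G A) (hC : IsStable G C)
    (hconn : (G.induce (A ∆ C : Finset α)).Connected) :
    IsExtreme ℝ (SSP G) (segment ℝ (indVec A) (indVec C)) := by
  rw [(segment_subset_tightFace hA hC).antisymm (tightFace_subset_segment hA hC hconn)]
  exact isExtreme_tightFace G A C

theorem IsStable.symmDiff_of_closed (hA : IsStable G A) (hB : IsStable G B) {K : Finset α}
    (hK : K ⊆ A ∆ B) (hclosed : ∀ v ∈ K, ∀ w ∈ A ∆ B, G.Adj v w → w ∈ K) :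
    IsStable G (A ∆ K) := by
  have hKB : ∀ w ∈ K, w ∉ A → w ∈ B := by grind [Finset.mem_symmDiff]
  have hcross : ∀ v ∈ A, v ∉ K → ∀ w ∈ K, w ∉ A → ¬G.Adj w v := by
    intro v hvA hvK w hwK hwA h
    have hvB : v ∉ B := fun hvB => hB w (hKB w hwK hwA) v hvB h
    exact hvK (hclosed w hwK v (Finset.mem_symmDiff.2 (.inl ⟨hvA, hvB⟩)) h)
  intro v hv w hw h
  rcases Finset.mem_symmDiff.1 hv with ⟨hvA, hvK⟩ | ⟨hvK, hvA⟩ <;>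
    rcases Finset.mem_symmDiff.1 hw with ⟨hwA, hwK⟩ | ⟨hwK, hwA⟩
  · exact hA v hvA w hwA h
  · exact hcross v hvA hvK w hwK hwA h.symm
  · exact hcross w hwA hwK v hvK hvA h
  · exact hB v (hKB v hvK hvA) w (hKB w hwK hwA) h

theorem base_change_general (G : SimpleGraph α) (A B : Finset α)
    (hA : IsStable G A) (hB : IsStable G B) (hBA : (B \ A).Nonempty) :
    ∃ C : Finset α, IsStable G C ∧ C ≠ A ∧
      A ∩ B ⊆ C ∧ C ⊆ A ∪ B ∧ (C ∩ (B \ A)).Nonempty ∧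
      IsExtreme ℝ (SSP G) (segment ℝ (indVec A) (indVec C)) := by
  obtain ⟨r, hr⟩ := hBA
  obtain ⟨K, hK, hrK, hconn, hclosed⟩ :=
    exists_connected_induce_of_mem G (S := (A ∆ B : Finset α)) (r := r)
      (by grind [Finset.mem_symmDiff])
  lift K to Finset α using (A ∆ B).finite_toSet.subset hK
  norm_cast at hK hrK hclosed
  have hC : IsStable G (A ∆ K) := hA.symmDiff_of_closed hB hK hclosed
  have hrC : r ∈ A ∆ K := by grind [Finset.mem_symmDiff]
  have hne : A ∆ K ≠ A := fun h => (Finset.mem_sdiff.1 hr).2 (h ▸ hrC)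
  refine ⟨A ∆ K, hC, hne, ?_, ?_, ⟨r, Finset.mem_inter.2 ⟨hrC, hr⟩⟩, ?_⟩
  · grind [Finset.mem_symmDiff]
  · grind [Finset.mem_symmDiff]
  · apply isExtreme_segment_indVec_of_connected hA hC
    rwa [symmDiff_symmDiff_cancel_left]

end StableSet

/-- Given stable sets `A` and `B` with `B \ A ≠ ∅`, there is a stable set `C ≠ A` with
`A ∩ B ⊆ C ⊆ A ∪ B`, meeting `B \ A`, such that `e_A` and `e_C` form an edge of
`SSP(G)`. -/
theorem base_change (G : SimpleGraph V) (A B : Finset V)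
    (hA : IsStable G A) (hB : IsStable G B) (hBA : (B \ A).Nonempty) :
    ∃ C : Finset V, IsStable G C ∧ C ≠ A ∧
      A ∩ B ⊆ C ∧ C ⊆ A ∪ B ∧ (C ∩ (B \ A)).Nonempty ∧
      IsExtreme ℝ (SSP G) (segment ℝ (indVec A) (indVec C)) :=
  base_change_general G A B hA hB hBA
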